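/- If |X| ≥ 3, the plurality SRS R^P satisfies neither independence of non-unanimous improvements (INUI) nor independence of irrelevant coalitions (IIC). -/

import Mathlib

/-!
Social ranking solutions (SRSs).  The set of individuals is a finite type `X`;
coalitions are elements of `Finset X` (so the domain of a power relation is the
whole power set `𝔛 = 2^X`).  A weak order `≿ ∈ ℛ(𝔛)` is encoded as a relation
`r : Finset X → Finset X → Prop` together with (when needed) its list of
equivalence classes `L = [Σ₁, …, Σ_l]` in strictly decreasing order
(`IsClassList r L`).
-/

namespace SocialRanking

variable {X : Type*} [Fintype X] [DecidableEq X]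

/-- A weak order: a reflexive, complete and transitive binary relation. -/
def IsWeakOrder {A : Type*} (r : A → A → Prop) : Prop :=
  Reflexive r ∧ (∀ a b, r a b ∨ r b a) ∧ Transitive r

/-- A social ranking solution maps every weak order on `2^X` to a weak order on `X`. -/
def IsSRS (R : (Finset X → Finset X → Prop) → X → X → Prop) : Prop :=
  ∀ r, IsWeakOrder r → IsWeakOrder (R r)

/-- `IsClassList r L` : `L = [Σ₁, …, Σ_l]` is the list of the equivalence classes of
the weak order `r` on `2^X`, in strictly decreasing order (`≿ : Σ₁ ≻ ⋯ ≻ Σ_l`):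
every class is nonempty, every coalition lies in exactly one class, and
`S ≿ T ↔ i ≤ j` whenever `S ∈ Σᵢ` and `T ∈ Σⱼ` (0-based indices). -/
def IsClassList (r : Finset X → Finset X → Prop) (L : List (Finset (Finset X))) : Prop :=
  (∀ C ∈ L, C.Nonempty) ∧
  (∀ S : Finset X, ∃! i : ℕ, i < L.length ∧ S ∈ L.getD i ∅) ∧
  (∀ i j : ℕ, i < L.length → j < L.length →
    ∀ S ∈ L.getD i ∅, ∀ T ∈ L.getD j ∅, (r S T ↔ i ≤ j))

/-- The asymmetric (strict) part `P` of a relation. -/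
def StrictPart {A : Type*} (p : A → A → Prop) (a b : A) : Prop := p a b ∧ ¬ p b a

/-- The symmetric part `I` (indifference) of a relation. -/
def IndiffPart {A : Type*} (p : A → A → Prop) (a b : A) : Prop := p a b ∧ p b a

/-- The restrictions of `p` and `q` to `{x, y}` coincide. -/
def AgreeOn (p q : X → X → Prop) (x y : X) : Prop :=
  ∀ a ∈ ({x, y} : Set X), ∀ b ∈ ({x, y} : Set X), (p a b ↔ q a b)

/-- `|Δ[x]|` : the number of coalitions in `Δ` containing `x`. -/
def count (Δ : Finset (Finset X)) (x : X) : ℕ := (Δ.filter (fun S => x ∈ S)).card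

/-! ### Independence axioms and further axioms -/

/-- WIVIP: for a dichotomous `≿ : Σ₁ ≻ Σ₂`, any `x ∈ ⋂Σ₁` is socially strictly above
any `y ∉ ⋂Σ₁`. -/
def WIVIP (R : (Finset X → Finset X → Prop) → X → X → Prop) : Prop :=
  ∀ (r : Finset X → Finset X → Prop) (C₁ C₂ : Finset (Finset X)),
    IsClassList r [C₁, C₂] →
    ∀ x y : X, (∀ S ∈ C₁, x ∈ S) → (∃ S ∈ C₁, y ∉ S) →
    StrictPart (R r) x y

/-- IWS (independence from the worst set): if `≿ : Σ₁ ≻ ⋯ ≻ Σ_{l-1} ≻ Σ_l` (`l ≥ 2`)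
and `≿'` is obtained from `≿` by partitioning the worst class `Σ_l` into ordered
classes `Γ₁ ≻' ⋯ ≻' Γ_{l'}`, then `x P_≿ y` implies `x P_≿' y`. -/
def IWS (R : (Finset X → Finset X → Prop) → X → X → Prop) : Prop :=
  ∀ (r r' : Finset X → Finset X → Prop) (L Γ : List (Finset (Finset X)))
    (W : Finset (Finset X)),
    L ≠ [] → IsClassList r (L ++ [W]) → IsClassList r' (L ++ Γ) →
    ∀ x y : X, StrictPart (R r) x y → StrictPart (R r') x y

/-- IBS (independence from the best set): if `≿ : Σ₁ ≻ Σ₂ ≻ ⋯ ≻ Σ_l` (`l ≥ 2`)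
and `≿'` is obtained from `≿` by partitioning the best class `Σ₁` into ordered
classes `Γ₁ ≻' ⋯ ≻' Γ_{l'}`, then `x P_≿ y` implies `x P_≿' y`. -/
def IBS (R : (Finset X → Finset X → Prop) → X → X → Prop) : Prop :=
  ∀ (r r' : Finset X → Finset X → Prop) (B : Finset (Finset X))
    (L Γ : List (Finset (Finset X))),
    L ≠ [] → IsClassList r (B :: L) → IsClassList r' (Γ ++ L) →
    ∀ x y : X, StrictPart (R r) x y → StrictPart (R r') x y

/-- TO (tops-only): two weak orders with the same best equivalence class get the
same social ranking. -/
def TO (R : (Finset X → Finset X → Prop) → X → X → Prop) : Prop :=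
  ∀ (r r' : Finset X → Finset X → Prop) (B : Finset (Finset X))
    (L L' : List (Finset (Finset X))),
    IsClassList r (B :: L) → IsClassList r' (B :: L') → R r = R r'

/-- The class list obtained from `L` by sliding `Δ` out of class `k₁` into class `k₂`
(`Σ_{k₁}` is replaced by `Σ_{k₁} \ Δ` and `Σ_{k₂}` by `Σ_{k₂} ∪ Δ`; if `Δ = Σ_{k₁}`
the emptied class disappears). -/
def slide (L : List (Finset (Finset X))) (k₁ k₂ : ℕ) (Δ : Finset (Finset X)) :
    List (Finset (Finset X)) :=
  ((L.set k₁ ((L.getD k₁ ∅) \ Δ)).set k₂ ((L.getD k₂ ∅) ∪ Δ)).filter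
    (fun C => decide (C ≠ ∅))

/-- SI (slide independence): sliding a proper subfamily `Δ ⊊ Σ_{k₁}` with
`|Δ[x]| = |Δ[y]|` into another class does not change the social ranking on `{x, y}`. -/
def SI (R : (Finset X → Finset X → Prop) → X → X → Prop) : Prop :=
  ∀ (r r' : Finset X → Finset X → Prop) (L : List (Finset (Finset X)))
    (k₁ k₂ : ℕ) (x y : X) (Δ : Finset (Finset X)),
    IsClassList r L → k₁ < L.length → k₂ < L.length →
    Δ ⊂ L.getD k₁ ∅ → count Δ x = count Δ y →
    IsClassList r' (slide L k₁ k₂ Δ) →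
    AgreeOn (R r) (R r') x y

/-- SSI (strong slide independence): as SI, but `Δ ⊆ Σ_{k₁}` may be the whole class
(in which case the class disappears). -/
def SSI (R : (Finset X → Finset X → Prop) → X → X → Prop) : Prop :=
  ∀ (r r' : Finset X → Finset X → Prop) (L : List (Finset (Finset X)))
    (k₁ k₂ : ℕ) (x y : X) (Δ : Finset (Finset X)),
    IsClassList r L → k₁ < L.length → k₂ < L.length →
    Δ ⊆ L.getD k₁ ∅ → count Δ x = count Δ y →
    IsClassList r' (slide L k₁ k₂ Δ) →
    AgreeOn (R r) (R r') x y

/-- Top-SI: the condition of SI restricted to slides out of the best class (`k₁ = 1`,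
i.e. index `0`). -/
def TopSI (R : (Finset X → Finset X → Prop) → X → X → Prop) : Prop :=
  ∀ (r r' : Finset X → Finset X → Prop) (L : List (Finset (Finset X)))
    (k₂ : ℕ) (x y : X) (Δ : Finset (Finset X)),
    IsClassList r L → 0 < L.length → k₂ < L.length →
    Δ ⊂ L.getD 0 ∅ → count Δ x = count Δ y →
    IsClassList r' (slide L 0 k₂ Δ) →
    AgreeOn (R r) (R r') x y

/-- The class list of `≿' : Σ₁ ≻' ⋯ ≻' Σ_{k-1} ≻' Δ ≻' Σ_k \ Δ ≻' ⋯ ≻' Σ_l`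
(empty classes disappear). -/
def inuiList (L : List (Finset (Finset X))) (k : ℕ) (Δ : Finset (Finset X)) :
    List (Finset (Finset X)) :=
  (L.take k ++ [Δ, (L.getD k ∅) \ Δ] ++ L.drop (k + 1)).filter
    (fun C => decide (C ≠ ∅))

/-- INUI (independence of non-unanimous improvements). -/
def INUI (R : (Finset X → Finset X → Prop) → X → X → Prop) : Prop :=
  ∀ (r r' : Finset X → Finset X → Prop) (L : List (Finset (Finset X)))
    (k : ℕ) (Δ : Finset (Finset X)) (x y : X),
    IsClassList r L → k < L.length → Δ ⊆ L.getD k ∅ →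
    (∃ S ∈ Δ, x ∉ S) → (∃ S ∈ Δ, y ∉ S) →
    IsClassList r' (inuiList L k Δ) →
    AgreeOn (R r) (R r') x y

/-- The weak order `≿_π := {(π(S), π(T)) : S ≿ T}` induced by a permutation `π` of `X`. -/
def permRel (π : Equiv.Perm X) (r : Finset X → Finset X → Prop) :
    Finset X → Finset X → Prop :=
  fun A B => r (A.image π.symm) (B.image π.symm)

/-- NT (neutrality). -/
def NT (R : (Finset X → Finset X → Prop) → X → X → Prop) : Prop :=
  ∀ (π : Equiv.Perm X) (r : Finset X → Finset X → Prop), IsWeakOrder r →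
    ∀ x y : X, (R (permRel π r) (π x) (π y) ↔ R r x y)

/-- IIC (independence of irrelevant coalitions). -/
def IIC (R : (Finset X → Finset X → Prop) → X → X → Prop) : Prop :=
  ∀ (r r' : Finset X → Finset X → Prop), IsWeakOrder r → IsWeakOrder r' →
    ∀ x y : X,
      (∀ S : Finset X, x ∉ S → y ∉ S →
        (r (insert x S) (insert y S) ↔ r' (insert x S) (insert y S))) →
      (R r x y ↔ R r' x y)

/-! ### The social ranking solutions -/

/-- `θ_≿(x) = (|Σ₁[x]|, …, |Σ_l[x]|)`. -/
def theta (L : List (Finset (Finset X))) (x : X) : List ℕ := L.map (fun C => count C x)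

/-- The lexicographic order `a ≥^L b` on vectors of naturals. -/
def GeLex (a b : List ℕ) : Prop :=
  a = b ∨ ∃ k < a.length, (∀ j < k, a.getD j 0 = b.getD j 0) ∧ b.getD k 0 < a.getD k 0

/-- The dual lexicographic order `a ≥^DL b` (read from the last coordinate;
fewer appearances in worse classes is better). -/
def GeDualLex (a b : List ℕ) : Prop :=
  a = b ∨ ∃ k < a.length, (∀ j, k < j → a.getD j 0 = b.getD j 0) ∧ a.getD k 0 < b.getD k 0

/-- The lexicographic excellence solution `R^L` : `x R^L_≿ y ↔ θ_≿(x) ≥^L θ_≿(y)`. -/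
def RL (r : Finset X → Finset X → Prop) (x y : X) : Prop :=
  ∀ L, IsClassList r L → GeLex (theta L x) (theta L y)

/-- The dual lexicographic excellence solution `R^DL`. -/
def RDL (r : Finset X → Finset X → Prop) (x y : X) : Prop :=
  ∀ L, IsClassList r L → GeDualLex (theta L x) (theta L y)

/-- Plurality `R^P` : `x R^P_≿ y ↔ |Σ₁[x]| ≥ |Σ₁[y]|`. -/
def RP (r : Finset X → Finset X → Prop) (x y : X) : Prop :=
  ∀ L, IsClassList r L → count (L.getD 0 ∅) y ≤ count (L.getD 0 ∅) x

/-- `e_≿(x)` : the largest `k` such that `x` belongs to every coalition of each of the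
first `k` equivalence classes (`0` if `x ∉ T₁`). -/
def eIIS (L : List (Finset (Finset X))) (x : X) : ℕ :=
  (L.takeWhile (fun C => decide (∀ S ∈ C, x ∈ S))).length

/-- The intersection initial segment rule `R^IIS` : `x R^IIS_≿ y ↔ e_≿(x) ≥ e_≿(y)`. -/
def RIIS (r : Finset X → Finset X → Prop) (x y : X) : Prop :=
  ∀ L, IsClassList r L → eIIS L y ≤ eIIS L x

/-- The constant-`X` rule: everybody is ranked indifferent. -/
def RconstX : (Finset X → Finset X → Prop) → X → X → Prop := fun _ _ _ => True

/-- The split-plurality score `s^split_≿(z) = ∑_{S ∈ Σ₁ : z ∈ S} 1/|S|`. -/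
def splitScore (C : Finset (Finset X)) (z : X) : ℚ :=
  ∑ S ∈ C.filter (fun S => z ∈ S), (1 : ℚ) / (S.card : ℚ)

/-- Split-plurality `R^splitP`. -/
def RsplitP (r : Finset X → Finset X → Prop) (x y : X) : Prop :=
  ∀ L, IsClassList r L → splitScore (L.getD 0 ∅) y ≤ splitScore (L.getD 0 ∅) x

/-- Plurality with tie-breaking by a linear order `t = ▷` :
`x R^{P,▷}_≿ y ↔ (x P^P_≿ y ∨ (x I^P_≿ y ∧ x ▷ y))`. -/
def RPtie (t : X → X → Prop) (r : Finset X → Finset X → Prop) (x y : X) : Prop :=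
  ∀ L, IsClassList r L →
    (count (L.getD 0 ∅) y < count (L.getD 0 ∅) x ∨
      (count (L.getD 0 ∅) x = count (L.getD 0 ∅) y ∧ t x y))


theorem mem_top_iff {r : Finset X → Finset X → Prop} {L : List (Finset (Finset X))}
    (h : IsClassList r L) (S : Finset X) : S ∈ L.getD 0 ∅ ↔ ∀ T, r S T := by
  obtain ⟨h1, h2, h3⟩ := h
  obtain ⟨i, ⟨hi, hiS⟩, -⟩ := h2 S
  have h0 : 0 < L.length := by omega
  constructor
  · intro hS T
    obtain ⟨j, ⟨hj, hjT⟩, -⟩ := h2 T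
    exact (h3 0 j h0 hj S hS T hjT).2 (Nat.zero_le _)
  · intro hS
    have hne : (L.getD 0 ∅).Nonempty := by
      apply h1
      rw [List.getD_eq_getElem _ _ h0]
      exact List.getElem_mem h0
    obtain ⟨T, hT⟩ := hne
    have := (h3 i 0 hi h0 S hiS T hT).1 (hS T)
    have : i = 0 := by omega
    rwa [this] at hiS

theorem RP_iff {r : Finset X → Finset X → Prop} {L : List (Finset (Finset X))}
    (h : IsClassList r L) (x y : X) :
    RP r x y ↔ count (L.getD 0 ∅) y ≤ count (L.getD 0 ∅) x := by
  constructor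
  · intro hr
    exact hr L h
  · intro hc L' h'
    have : L'.getD 0 ∅ = L.getD 0 ∅ := by
      ext S
      rw [mem_top_iff h, mem_top_iff h']
    rwa [this]

def lev (f : Finset X → ℕ) (i : ℕ) : Finset (Finset X) := Finset.univ.filter (fun S => f S = i)

theorem classList_lev (f : Finset X → ℕ) (n : ℕ) (hf : ∀ S, f S < n)
    (hs : ∀ i < n, ∃ S, f S = i) :
    IsClassList (fun S T => f S ≤ f T) ((List.range n).map (lev f)) := by
  have key : ∀ i < n, ((List.range n).map (lev f)).getD i ∅ = lev f i := by
    intro i hi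
    rw [List.getD_eq_getElem _ _ (by simpa using hi)]
    simp
  refine ⟨?_, ?_, ?_⟩
  · intro C hC
    simp only [List.mem_map, List.mem_range] at hC
    obtain ⟨i, hi, rfl⟩ := hC
    obtain ⟨S, hS⟩ := hs i hi
    exact ⟨S, by simp [lev, hS]⟩
  · intro S
    refine ⟨f S, ⟨by simpa using hf S, ?_⟩, ?_⟩
    · rw [key _ (hf S)]; simp [lev]
    · rintro j ⟨hj, hjS⟩
      have hj' : j < n := by simpa using hj
      rw [key _ hj'] at hjS
      simp only [lev, Finset.mem_filter] at hjS
      exact hjS.2.symm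
  · intro i j hi hj S hS T hT
    rw [key _ (by simpa using hi)] at hS
    rw [key _ (by simpa using hj)] at hT
    simp only [lev, Finset.mem_filter, Finset.mem_univ, true_and] at hS hT
    simp only [hS, hT]

theorem weak_lev (f : Finset X → ℕ) : IsWeakOrder (fun S T => f S ≤ f T) :=
  ⟨fun _ => le_rfl, fun _ _ => le_total _ _, fun _ _ _ h1 h2 => le_trans h1 h2⟩

theorem count_univ_le (x y : X) :
    count (Finset.univ : Finset (Finset X)) x ≤ count (Finset.univ : Finset (Finset X)) y := by
  unfold count
  apply Finset.card_le_card_of_injOn (fun S => S.map (Equiv.swap x y).toEmbedding)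
  · intro S hS
    simp only [Finset.coe_filter, Finset.mem_univ, true_and, Set.mem_setOf_eq] at hS ⊢
    exact Finset.mem_map.2 ⟨x, hS, by simp⟩
  · intro S _ T _ h
    exact Finset.map_injective _ h

theorem not_inui (x y : X) (hxy : x ≠ y) : ¬ INUI (X := X) RP := by
  intro H
  let Δ : Finset (Finset X) := {∅, {x}}
  have hyΔ : ({y} : Finset X) ∉ Δ := by
    simp [Δ, hxy.symm]
  have c1 := classList_lev (X := X) (fun _ => 0) 1 (by simp)
    (by intro i hi; exact ⟨∅, by omega⟩)
  have c2 := classList_lev (X := X) (fun S => if S ∈ Δ then 0 else 1) 2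
    (by intro S; split_ifs <;> omega)
    (by
      intro i hi
      rcases (by omega : i = 0 ∨ i = 1) with rfl | rfl
      · exact ⟨∅, by simp [Δ]⟩
      · exact ⟨{y}, by simp [hyΔ]⟩)
  have e1 : (List.range 1).map (lev (X := X) (fun _ => 0)) = [Finset.univ] := by
    simp [lev]
  have e2 : (List.range 2).map (lev (X := X) (fun S => if S ∈ Δ then 0 else 1))
      = [Δ, Finset.univ \ Δ] := by
    have a : lev (X := X) (fun S => if S ∈ Δ then 0 else 1) 0 = Δ := by
      ext S; simp [lev]
    have b : lev (X := X) (fun S => if S ∈ Δ then 0 else 1) 1 = Finset.univ \ Δ := by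
      ext S; simp [lev]
    simp only [List.range_succ, List.range_zero, List.nil_append, List.cons_append, List.map_cons,
      List.map_nil, a, b]
  have e3 : inuiList [Finset.univ] 0 Δ = [Δ, Finset.univ \ Δ] := by
    have a : Δ ≠ ∅ := Finset.ne_empty_of_mem (a := ∅) (by simp [Δ])
    have b : Finset.univ \ Δ ≠ ∅ := Finset.ne_empty_of_mem (a := {y}) (by simp [hyΔ])
    unfold inuiList
    rw [List.filter_eq_self.2]
    · simp
    · intro C hC
      simp at hC
      rcases hC with rfl | rfl
      · simpa using a
      · simpa using b
  rw [e1] at c1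
  rw [e2] at c2
  have := H _ _ [Finset.univ] 0 Δ x y c1 (by simp) (by simp) ⟨∅, by simp [Δ], by simp⟩
    ⟨∅, by simp [Δ], by simp⟩ (by rw [e3]; exact c2) y (by simp) x (by simp)
  rw [RP_iff c1, RP_iff c2] at this
  have h := this.1 (count_univ_le x y)
  simp [count, Δ, Finset.filter_insert, Finset.filter_singleton, hxy.symm] at h

theorem not_iic (x y z : X) (hxy : x ≠ y) (hxz : x ≠ z) (hyz : y ≠ z) :
    ¬ IIC (X := X) RP := by
  intro H
  let f : Finset X → ℕ := fun S => if S = {x} then 0 else if S = {y, z} then 1 else 2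
  let g : Finset X → ℕ := fun S => if S = {y, z} then 0 else if S = {x} then 1 else 2
  have n1 : ({y, z} : Finset X) ≠ {x} := by
    intro h
    have : y ∈ ({x} : Finset X) := h ▸ (by simp)
    simp [hxy.symm] at this
  have n2 : (∅ : Finset X) ≠ {y, z} := (Finset.insert_ne_empty _ _).symm
  have n3 : (∅ : Finset X) ≠ {x} := (Finset.singleton_ne_empty _).symm
  have c1 := classList_lev f 3 (by intro S; dsimp only [f]; split_ifs <;> omega)
    (by
      intro i hi
      rcases (by omega : i = 0 ∨ i = 1 ∨ i = 2) with rfl | rfl | rfl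
      · exact ⟨{x}, by simp [f]⟩
      · exact ⟨{y, z}, by simp [f, n1]⟩
      · exact ⟨∅, by simp [f, n2, n3]⟩)
  have c2 := classList_lev g 3 (by intro S; dsimp only [g]; split_ifs <;> omega)
    (by
      intro i hi
      rcases (by omega : i = 0 ∨ i = 1 ∨ i = 2) with rfl | rfl | rfl
      · exact ⟨{y, z}, by simp [g]⟩
      · exact ⟨{x}, by simp [g, n1.symm]⟩
      · exact ⟨∅, by simp [g, n2, n3]⟩)
  have t1 : ((List.range 3).map (lev f)).getD 0 ∅ = {{x}} := by
    have : lev f 0 = {{x}} := by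
      ext S; simp only [lev, f, Finset.mem_filter, Finset.mem_univ, true_and,
        Finset.mem_singleton]
      split_ifs <;> simp_all
    simpa [List.range_succ] using this
  have t2 : ((List.range 3).map (lev g)).getD 0 ∅ = {{y, z}} := by
    have : lev g 0 = {{y, z}} := by
      ext S; simp only [lev, g, Finset.mem_filter, Finset.mem_univ, true_and,
        Finset.mem_singleton]
      split_ifs <;> simp_all
    simpa [List.range_succ] using this
  have := H _ _ (weak_lev f) (weak_lev g) x y (by
    intro S hx hy
    have a1 : insert x S ≠ {y, z} := by
      intro h
      have : x ∈ ({y, z} : Finset X) := h ▸ (by simp)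
      simp [hxy, hxz] at this
    have a2 : insert y S ≠ {x} := by
      intro h
      have : y ∈ ({x} : Finset X) := h ▸ (by simp)
      simp [hxy.symm] at this
    have a3 : ¬ (insert x S = {x} ∧ insert y S = {y, z}) := by
      rintro ⟨h1, h2⟩
      have h3 : z ∈ insert y S := h2 ▸ (by simp)
      have h4 : z ∈ S := by simpa [hyz.symm] using h3
      have h5 : z ∈ ({x} : Finset X) := h1 ▸ (by simp [h4])
      simp [hxz.symm] at h5
    simp only [f, g, if_neg a1, if_neg a2]
    split_ifs <;> simp_all)
  rw [RP_iff c1, RP_iff c2, t1, t2] at this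
  simp [count, Finset.filter_singleton, hxy, hxz, hxy.symm] at this

/-- If `|X| ≥ 3`, plurality satisfies neither INUI nor IIC. -/
theorem plurality_not_inui_iic (hX : 3 ≤ Fintype.card X) :
    ¬ INUI (X := X) RP ∧ ¬ IIC (X := X) RP := by
  obtain ⟨x, y, z, hxy, hxz, hyz⟩ := Fintype.two_lt_card_iff.1 hX
  exact ⟨not_inui x y hxy, not_iic x y z hxy hxz hyz⟩

end SocialRanking
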